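/- arXiv:2503.19205 — 5 statements merged into one kernel-verified Lean document; each statement's English description precedes it below -/
import Mathlib

section
/- Let b : ℕ → ℝ be a sequence, let ε > 0, and let α : ℝ → ℝ be strictly increasing with α(0) = 0 and α(s) ≤ s for all s ≥ 0. If b(0) > 0 and b(t+1) − b(t) + α(b(t)) ≥ ε for every t ∈ ℕ, then b(t) > 0 for every t ∈ ℕ, and moreover b(t) ≥ ε for every t ≥ 1. -/
section OrderedAddGroup

variable {G : Type*} [AddGroup G] [Preorder G] [AddLeftMono G]

theorem le_of_le_sub_add_of_le {ε x y z : G} (h : ε ≤ y - x + z) (hzx : z ≤ x) : ε ≤ y :=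
  calc
    ε ≤ y - x + z := h
    _ ≤ y - x + x := by gcongr
    _ = y := sub_add_cancel y x

variable {b : ℕ → G} {ε : G} {α : G → G}

theorem pos_of_forall_le_sub_add (hε : 0 < ε) (hα_le : ∀ s, 0 < s → α s ≤ s) (hb0 : 0 < b 0)
    (hrec : ∀ t, ε ≤ b (t + 1) - b t + α (b t)) (t : ℕ) : 0 < b t := by
  induction t with
  | zero => exact hb0
  | succ t ih => exact hε.trans_le (le_of_le_sub_add_of_le (hrec t) (hα_le (b t) ih))

theorem dcbf_strict_invariance_general (hε : 0 < ε) (hα_le : ∀ s, 0 < s → α s ≤ s)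
    (hb0 : 0 < b 0) (hrec : ∀ t, ε ≤ b (t + 1) - b t + α (b t)) :
    (∀ t, 0 < b t) ∧ (∀ t, 1 ≤ t → ε ≤ b t) := by
  have hpos : ∀ t, 0 < b t := pos_of_forall_le_sub_add hε hα_le hb0 hrec
  refine ⟨hpos, fun t ht => ?_⟩
  obtain ⟨k, rfl⟩ := Nat.exists_eq_add_of_le' ht
  exact le_of_le_sub_add_of_le (hrec k) (hα_le (b k) (hpos k))

end OrderedAddGroup

/-- Strict one-order DCBF invariance (Remark 1): enforcing the discrete-time barrier
inequality with a positive margin `ε` keeps the barrier value strictly positive for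
all times, and bounded below by `ε` from step 1 onwards. -/
theorem dcbf_strict_invariance (b : ℕ → ℝ) (ε : ℝ) (hε : 0 < ε) (α : ℝ → ℝ)
    (hα_mono : StrictMono α) (hα_zero : α 0 = 0)
    (hα_le : ∀ s : ℝ, 0 ≤ s → α s ≤ s)
    (hb0 : 0 < b 0)
    (hrec : ∀ t : ℕ, b (t + 1) - b t + α (b t) ≥ ε) :
    (∀ t : ℕ, 0 < b t) ∧ (∀ t : ℕ, 1 ≤ t → ε ≤ b t) :=
  dcbf_strict_invariance_general hε (fun s hs => hα_le s hs.le) hb0 hrec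
end

section
/- Let m ≥ 1 and let ψ_0 : ℕ → ℝ be a sequence. For i = 1, …, m let α_i : ℝ → ℝ be strictly increasing with α_i(0) = 0 and α_i(s) ≤ s for all s ≥ 0, and define recursively ψ_i(t) = ψ_{i−1}(t+1) − ψ_{i−1}(t) + α_i(ψ_{i−1}(t)) for all t ∈ ℕ. If ψ_i(0) ≥ 0 for every i ∈ {0, …, m−1} and ψ_m(t) ≥ 0 for every t ∈ ℕ, then ψ_i(t) ≥ 0 for every i ∈ {0, …, m−1} and every t ∈ ℕ; in particular ψ_0(t) ≥ 0 for all t. -/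
section

variable {G : Type*} [AddCommGroup G]

/-- The next-order discrete-time control barrier function (DCBF) along a trajectory: the paper's
recursion reads `ψ_i = dcbf α_i ψ_{i-1}`. Here `α` may be any function, not only one of class κ. -/
def dcbf (α : G → G) (u : ℕ → G) (t : ℕ) : G :=
  u (t + 1) - u t + α (u t)

theorem dcbf_add_sub_apply (α : G → G) (u : ℕ → G) (t : ℕ) :
    dcbf α u t + (u t - α (u t)) = u (t + 1) := by
  unfold dcbf
  abel

variable [Preorder G] [IsOrderedAddMonoid G]

theorem nonneg_of_dcbf_nonneg {α : G → G} {u : ℕ → G} (hα : ∀ s, 0 ≤ s → α s ≤ s)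
    (hu_zero : 0 ≤ u 0) (hu_dcbf : ∀ t, 0 ≤ dcbf α u t) (t : ℕ) : 0 ≤ u t := by
  induction t with
  | zero => exact hu_zero
  | succ t hu =>
    calc
      0 ≤ dcbf α u t + (u t - α (u t)) := add_nonneg (hu_dcbf t) (sub_nonneg.2 (hα _ hu))
      _ = u (t + 1) := dcbf_add_sub_apply α u t

theorem dhocbf_safety_general {m : ℕ} {ψ : ℕ → ℕ → G} {α : ℕ → G → G}
    (hα : ∀ i < m, ∀ s, 0 ≤ s → α (i + 1) s ≤ s)
    (hrec : ∀ i < m, ∀ t, ψ (i + 1) t = dcbf (α (i + 1)) (ψ i) t)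
    (hinit : ∀ i < m, 0 ≤ ψ i 0) (htop : ∀ t, 0 ≤ ψ m t) {i : ℕ} (hi : i ≤ m) :
    ∀ t, 0 ≤ ψ i t := by
  induction hi using Nat.decreasingInduction with
  | self => exact htop
  | of_succ i hi hsucc =>
    exact nonneg_of_dcbf_nonneg (hα i hi) (hinit i hi) fun t => hrec i hi t ▸ hsucc t

end

/-- Safety guarantee for discrete-time high-order CBFs (Theorem 1), stated along a
fixed trajectory: `ψ 0 t = h (x t)`, and `ψ (i+1)` is obtained from `ψ i` via the
DCBF recursion with class-κ functions `α (i+1)` bounded above by the identity on the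
nonnegative reals. If `ψ i 0 ≥ 0` for all `i < m` and the highest-order constraint
`ψ m t ≥ 0` holds for all `t`, then `ψ i t ≥ 0` for all `i < m` and all `t`;
in particular `ψ 0 t ≥ 0` for all `t`. -/
theorem dhocbf_safety (m : ℕ) (hm : 1 ≤ m) (ψ : ℕ → ℕ → ℝ) (α : ℕ → ℝ → ℝ)
    (hα_mono : ∀ i : ℕ, 1 ≤ i → i ≤ m → StrictMono (α i))
    (hα_zero : ∀ i : ℕ, 1 ≤ i → i ≤ m → α i 0 = 0)
    (hα_le : ∀ i : ℕ, 1 ≤ i → i ≤ m → ∀ s : ℝ, 0 ≤ s → α i s ≤ s)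
    (hrec : ∀ i : ℕ, i < m → ∀ t : ℕ,
      ψ (i + 1) t = ψ i (t + 1) - ψ i t + α (i + 1) (ψ i t))
    (hinit : ∀ i : ℕ, i < m → 0 ≤ ψ i 0)
    (htop : ∀ t : ℕ, 0 ≤ ψ m t) :
    (∀ i : ℕ, i < m → ∀ t : ℕ, 0 ≤ ψ i t) ∧ (∀ t : ℕ, 0 ≤ ψ 0 t) := by
  have hψ {i : ℕ} (hi : i ≤ m) : ∀ t, 0 ≤ ψ i t :=
    dhocbf_safety_general (fun i hi => hα_le (i + 1) i.succ_pos hi) hrec hinit htop hi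
  exact ⟨fun _ hi => hψ hi.le, hψ m.zero_le⟩
end

section
/- Let J ≥ 1, ε > 0, and let φ_0 : ℕ → ℝ be a sequence. For j = 1, …, J let α_j : ℝ → ℝ be strictly increasing with α_j(0) = 0 and α_j(s) ≤ s for all s ≥ 0, and define recursively φ_j(t) = φ_{j−1}(t+1) − φ_{j−1}(t) + α_j(φ_{j−1}(t)) for all t ∈ ℕ. If φ_j(0) > 0 for every j ∈ {0, …, J−1} and φ_J(t) ≥ ε for every t ∈ ℕ, then φ_j(t) > 0 for every j ∈ {0, …, J−1} and every t ∈ ℕ. -/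
theorem forall_le_of_initial_of_top {P : ℕ → ℕ → Prop} {J : ℕ}
    (initial : ∀ j < J, P j 0) (top : ∀ t, P J t)
    (step : ∀ j < J, ∀ t, P j t → P (j + 1) t → P j (t + 1)) :
    ∀ j ≤ J, ∀ t, P j t := by
  intro j hj t
  -- The step for `j` looks one index up, so the induction on `t` must treat all `j` at once.
  induction t generalizing j with
  | zero =>
    obtain hlt | rfl := hj.lt_or_eq
    · exact initial j hlt
    · exact top 0
  | succ t ih =>
    obtain hlt | rfl := hj.lt_or_eq
    · exact step j hlt t (ih j hj) (ih (j + 1) hlt)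
    · exact top (t + 1)

theorem le_of_eq_sub_add_of_le {G : Type*} [AddGroup G] [LE G] [AddLeftMono G]
    {x x' y a : G} (hy : y = x' - x + a) (ha : a ≤ x) : y ≤ x' :=
  calc
    y = x' - x + a := hy
    _ ≤ x' - x + x := add_le_add_right ha _
    _ = x' := sub_add_cancel x' x

theorem dhocbf_strict_invariance_general {G : Type*} [AddGroup G] [Preorder G] [AddLeftMono G]
    {J : ℕ} {φ : ℕ → ℕ → G} {α : ℕ → G → G}
    (hα_le : ∀ j < J, ∀ s, 0 < s → α (j + 1) s ≤ s)
    (hrec : ∀ j < J, ∀ t, φ (j + 1) t = φ j (t + 1) - φ j t + α (j + 1) (φ j t))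
    (hinit : ∀ j < J, 0 < φ j 0) (htop : ∀ t, 0 < φ J t) :
    ∀ j ≤ J, ∀ t, 0 < φ j t := by
  refine forall_le_of_initial_of_top hinit htop fun j hj t hpos hpos_next => ?_
  have hle : φ (j + 1) t ≤ φ j (t + 1) :=
    le_of_eq_sub_add_of_le (hrec j hj t) (hα_le j hj _ hpos)
  exact hpos_next.trans_le hle

/-- Multi-order strict invariance (Remark 1): if `φ j 0 > 0` for all `j < J` and the
highest-order constraint `φ J t ≥ ε` holds with margin `ε > 0` for all `t`, where
`φ (j+1)` is obtained from `φ j` via the DCBF recursion with class-κ functions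
bounded above by the identity on the nonnegative reals, then `φ j t > 0` for all
`j < J` and all `t`. -/
theorem dhocbf_strict_invariance (J : ℕ) (hJ : 1 ≤ J) (ε : ℝ) (hε : 0 < ε)
    (φ : ℕ → ℕ → ℝ) (α : ℕ → ℝ → ℝ)
    (hα_mono : ∀ j : ℕ, 1 ≤ j → j ≤ J → StrictMono (α j))
    (hα_zero : ∀ j : ℕ, 1 ≤ j → j ≤ J → α j 0 = 0)
    (hα_le : ∀ j : ℕ, 1 ≤ j → j ≤ J → ∀ s : ℝ, 0 ≤ s → α j s ≤ s)
    (hrec : ∀ j : ℕ, j < J → ∀ t : ℕ,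
      φ (j + 1) t = φ j (t + 1) - φ j t + α (j + 1) (φ j t))
    (hinit : ∀ j : ℕ, j < J → 0 < φ j 0)
    (htop : ∀ t : ℕ, ε ≤ φ J t) :
    ∀ j : ℕ, j < J → ∀ t : ℕ, 0 < φ j t := by
  intro j hj
  exact dhocbf_strict_invariance_general
    (fun i hi s hs => hα_le (i + 1) i.succ_pos hi s hs.le) hrec hinit
    (fun t => hε.trans_le (htop t)) j hj.le
end

section
/- Let m ≥ 1 and let h : ℕ → ℝ be a sequence. For i = 1, …, m let a_i : ℕ → ℝ be sequences with a_i(t) > 0 for all t, and for i = 1, …, m−1 let α_i : ℝ → ℝ be strictly increasing with α_i(0) = 0 and α_i(s) ≤ s for all s ≥ 0. Define ψ_0(t) = a_1(t) · h(t) and, for i = 1, …, m−1, ψ_i(t) = a_{i+1}(t) · ( ψ_{i−1}(t+1) − ψ_{i−1}(t) + α_i(ψ_{i−1}(t)) ). If ψ_i(0) ≥ 0 for every i ∈ {0, …, m−1} and ψ_{m−1}(t) ≥ 0 for every t ∈ ℕ, then ψ_i(t) ≥ 0 for every i ∈ {0, …, m−1} and every t ∈ ℕ, and moreover h(t) ≥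 0 for every t ∈ ℕ. -/
/-!
Along a sequence `u` with `u (t + 1) - u t + α (u t) ≥ 0`, we have `u (t + 1) ≥ u t - α (u t) ≥ 0`
as soon as `u t ≥ 0`, because `α` lies below the identity on nonnegative arguments. Being
positive, the auxiliary variables cancel from `ψ (i + 1) ≥ 0`, which leaves this inequality for
`u = ψ i` and `α (i + 1)`; so nonnegativity descends from `ψ (m - 1)` to `ψ 0`, and
from there to `h`.
-/

theorem nonneg_of_sub_add_nonneg {G : Type*} [AddCommGroup G] [PartialOrder G]
    [IsOrderedAddMonoid G] {u : ℕ → G} {α : G → G} (hα : ∀ s, 0 ≤ s → α s ≤ s)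
    (hzero : 0 ≤ u 0) (hstep : ∀ t, 0 ≤ u (t + 1) - u t + α (u t)) (t : ℕ) : 0 ≤ u t := by
  induction t with
  | zero => exact hzero
  | succ t ih =>
    calc
      0 ≤ u (t + 1) - u t + α (u t) := hstep t
      _ ≤ u (t + 1) - u t + u t := by gcongr; exact hα _ ih
      _ = u (t + 1) := sub_add_cancel _ _

section OrderedRing

variable {R : Type*} [Ring R] [LinearOrder R] [IsStrictOrderedRing R]

theorem nonneg_of_mul_sub_add_nonneg {u a : ℕ → R} {α : R → R} (ha : ∀ t, 0 < a t)
    (hα : ∀ s, 0 ≤ s → α s ≤ s) (hzero : 0 ≤ u 0)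
    (hstep : ∀ t, 0 ≤ a t * (u (t + 1) - u t + α (u t))) (t : ℕ) : 0 ≤ u t :=
  nonneg_of_sub_add_nonneg hα hzero (fun t => nonneg_of_mul_nonneg_right (hstep t) (ha t)) t

theorem davcbf_nonneg_of_top_nonneg {n : ℕ} {ψ a : ℕ → ℕ → R} {α : ℕ → R → R}
    (ha : ∀ i < n, ∀ t, 0 < a i t) (hα : ∀ i < n, ∀ s, 0 ≤ s → α i s ≤ s)
    (hrec : ∀ i < n, ∀ t, ψ (i + 1) t = a i t * (ψ i (t + 1) - ψ i t + α i (ψ i t)))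
    (hinit : ∀ i < n, 0 ≤ ψ i 0) (htop : ∀ t, 0 ≤ ψ n t) {i : ℕ} (hi : i ≤ n) :
    ∀ t, 0 ≤ ψ i t := by
  induction hi using Nat.decreasingInduction with
  | self => exact htop
  | of_succ i hi ih =>
    exact nonneg_of_mul_sub_add_nonneg (ha i hi) (hα i hi) (hinit i hi)
      fun t => hrec i hi t ▸ ih t

theorem davcbf_safety_general (m : ℕ) (hm : 1 ≤ m) (h : ℕ → R) (ψ : ℕ → ℕ → R)
    (a : ℕ → ℕ → R) (α : ℕ → R → R)
    (ha_pos : ∀ i : ℕ, 1 ≤ i → i ≤ m → ∀ t : ℕ, 0 < a i t)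
    (hα_le : ∀ i : ℕ, 1 ≤ i → i ≤ m - 1 → ∀ s : R, 0 ≤ s → α i s ≤ s)
    (hψ0 : ∀ t : ℕ, ψ 0 t = a 1 t * h t)
    (hrec : ∀ i : ℕ, 1 ≤ i → i ≤ m - 1 → ∀ t : ℕ,
      ψ i t = a (i + 1) t * (ψ (i - 1) (t + 1) - ψ (i - 1) t + α i (ψ (i - 1) t)))
    (hinit : ∀ i : ℕ, i < m - 1 → 0 ≤ ψ i 0)
    (htop : ∀ t : ℕ, 0 ≤ ψ (m - 1) t) :
    (∀ i : ℕ, i < m → ∀ t : ℕ, 0 ≤ ψ i t) ∧ (∀ t : ℕ, 0 ≤ h t) := by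
  have hψ_nonneg : ∀ i, i < m → ∀ t, 0 ≤ ψ i t := fun i hi =>
    davcbf_nonneg_of_top_nonneg (a := fun i => a (i + 2)) (α := fun i => α (i + 1))
      (fun i hi => ha_pos (i + 2) (by lia) (by lia))
      (fun i hi => hα_le (i + 1) (by lia) hi)
      (fun i hi => hrec (i + 1) (by lia) hi)
      hinit htop (Nat.le_sub_one_of_lt hi)
  refine ⟨hψ_nonneg, fun t => ?_⟩
  have hmul_nonneg : 0 ≤ a 1 t * h t := hψ0 t ▸ hψ_nonneg 0 hm t
  exact nonneg_of_mul_nonneg_right hmul_nonneg (ha_pos 1 le_rfl hm t)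

end OrderedRing

/-- Safety guarantee for Discrete-time Auxiliary-Variable adaptive CBFs
(DAVCBFs, Theorem 2), stated along a fixed trajectory: with strictly positive
auxiliary variables `a i`, `ψ 0 t = a 1 t * h t` and
`ψ i t = a (i+1) t * (ψ (i-1) (t+1) - ψ (i-1) t + α i (ψ (i-1) t))` for
`i = 1, …, m-1`, where each `α i` is a class-κ function bounded above by the
identity on the nonnegative reals. If `ψ i 0 ≥ 0` for all `i < m` and
`ψ (m-1) t ≥ 0` for all `t`, then `ψ i t ≥ 0` for all `i < m` and `t`, and
`h t ≥ 0` for all `t`. -/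
theorem davcbf_safety (m : ℕ) (hm : 1 ≤ m) (h : ℕ → ℝ) (ψ : ℕ → ℕ → ℝ)
    (a : ℕ → ℕ → ℝ) (α : ℕ → ℝ → ℝ)
    (ha_pos : ∀ i : ℕ, 1 ≤ i → i ≤ m → ∀ t : ℕ, 0 < a i t)
    (hα_mono : ∀ i : ℕ, 1 ≤ i → i ≤ m - 1 → StrictMono (α i))
    (hα_zero : ∀ i : ℕ, 1 ≤ i → i ≤ m - 1 → α i 0 = 0)
    (hα_le : ∀ i : ℕ, 1 ≤ i → i ≤ m - 1 → ∀ s : ℝ, 0 ≤ s → α i s ≤ s)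
    (hψ0 : ∀ t : ℕ, ψ 0 t = a 1 t * h t)
    (hrec : ∀ i : ℕ, 1 ≤ i → i ≤ m - 1 → ∀ t : ℕ,
      ψ i t = a (i + 1) t * (ψ (i - 1) (t + 1) - ψ (i - 1) t + α i (ψ (i - 1) t)))
    (hinit : ∀ i : ℕ, i < m → 0 ≤ ψ i 0)
    (htop : ∀ t : ℕ, 0 ≤ ψ (m - 1) t) :
    (∀ i : ℕ, i < m → ∀ t : ℕ, 0 ≤ ψ i t) ∧ (∀ t : ℕ, 0 ≤ h t) :=
  davcbf_safety_general m hm h ψ a α ha_pos hα_le hψ0 hrec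
    (fun i hi => hinit i (Nat.lt_of_lt_pred hi)) htop
end

section
/- Let Ω be a type and let ρ : (Ω → ℝ) → ℝ be monotone (if X(ω) ≤ Y(ω) for all ω then ρ(X) ≤ ρ(Y)), superadditive (ρ(X + Y) ≥ ρ(X) + ρ(Y)), positively homogeneous (ρ(c · X) = c · ρ(X) for every real c ≥ 0), and normalized (ρ(0) = 0). Let m ≥ 1, let h : ℕ → (Ω → ℝ), for i = 1, …, m let a_i : ℕ → ℝ satisfy a_i(t) > 0 for all t, and for i = 1, …, m−1 let α_i : ℝ → ℝ satisfy α_i(s) ≤ s for all s ∈ ℝ. Define ψ_0(t)(ω) = a_1(t) · h(t)(ω) and, for i = 1, …, m−1, ψ_i(t)(ω) = a_{i+1}(t) · ( ψ_{i−1}(t+1)(ω) − ψ_{i−1}(t)(ω) + α_i(ψ_{i−1}(t)(ω)) ). If ρ(ψ_i(0)) ≥ 0 for every i ∈ {0, …, m−1} and ρ(ψ_{m−1}(t)) ≥ 0 for every t ∈ ℕ, then ρ(ψ_i(t)) ≥ 0 for every i ∈ {0, …, m−1} and every t ∈ ℕ, and moreover ρ(h(t)) ≥ 0 for every t ∈ ℕ.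 -/
/-!
Since `α i s ≤ s`, the recursion gives `ψ i t ≤ a (i + 1) t * ψ (i - 1) (t + 1)`, hence
`ρ (ψ i t) ≤ a (i + 1) t * ρ (ψ (i - 1) (t + 1))` by monotonicity and positive homogeneity.
So nonnegativity at level `i` for all times passes to level `i - 1` for all positive times, while
time `0` is covered by the initial condition; descend from level `m - 1` to `ψ 0 = a 1 * h`.
-/

theorem forall_le_of_descending_step {P : ℕ → ℕ → Prop} {n : ℕ} (hinit : ∀ i < n, P i 0)
    (htop : ∀ t, P n t) (hstep : ∀ i < n, ∀ t, P (i + 1) t → P i (t + 1)) :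
    ∀ i ≤ n, ∀ t, P i t := by
  intro i hi
  induction hi using Nat.decreasingInduction with
  | self => exact htop
  | of_succ i hi ih =>
    rintro (_ | t)
    · exact hinit i hi
    · exact hstep i hi t (ih t)

section OrderedModule

variable {𝕜 E : Type*} [Ring 𝕜] [LinearOrder 𝕜] [IsStrictOrderedRing 𝕜] [AddCommGroup E]
  [Module 𝕜 E] {ρ : E → 𝕜}

theorem map_smul_nonneg_iff_of_pos (hhomog : ∀ c : 𝕜, 0 < c → ∀ X : E, ρ (c • X) = c * ρ X)
    {c : 𝕜} (hc : 0 < c) {X : E} : 0 ≤ ρ (c • X) ↔ 0 ≤ ρ X := by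
  rw [hhomog c hc, mul_nonneg_iff_of_pos_left hc]

variable [PartialOrder E] [IsOrderedAddMonoid E] [PosSMulMono 𝕜 E]

theorem map_nonneg_of_map_smul_sub_add_nonneg (hmono : Monotone ρ)
    (hhomog : ∀ c : 𝕜, 0 < c → ∀ X : E, ρ (c • X) = c * ρ X) {c : 𝕜} (hc : 0 < c) {X Y Z : E}
    (hZX : Z ≤ X) (hρ : 0 ≤ ρ (c • (Y - X + Z))) : 0 ≤ ρ Y := by
  have hdiff : Y - X + Z ≤ Y := by
    rw [sub_add]
    exact sub_le_self Y (sub_nonneg.2 hZX)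
  exact (map_smul_nonneg_iff_of_pos hhomog hc).1
    (hρ.trans (hmono (smul_le_smul_of_nonneg_left hdiff hc.le)))

theorem racbf_safety_general (hmono : Monotone ρ)
    (hhomog : ∀ c : 𝕜, 0 < c → ∀ X : E, ρ (c • X) = c * ρ X)
    {n : ℕ} {h : ℕ → E} {ψ : ℕ → ℕ → E} {a : ℕ → ℕ → 𝕜} {α : ℕ → E → E}
    (ha_pos : ∀ i ≤ n, ∀ t, 0 < a (i + 1) t)
    (hα_le : ∀ i < n, ∀ X, α (i + 1) X ≤ X)
    (hψ0 : ∀ t, ψ 0 t = a 1 t • h t)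
    (hrec : ∀ i < n, ∀ t,
      ψ (i + 1) t = a (i + 2) t • (ψ i (t + 1) - ψ i t + α (i + 1) (ψ i t)))
    (hinit : ∀ i < n, 0 ≤ ρ (ψ i 0)) (htop : ∀ t, 0 ≤ ρ (ψ n t)) :
    (∀ i ≤ n, ∀ t, 0 ≤ ρ (ψ i t)) ∧ ∀ t, 0 ≤ ρ (h t) := by
  have hstep : ∀ i < n, ∀ t, 0 ≤ ρ (ψ (i + 1) t) → 0 ≤ ρ (ψ i (t + 1)) := by
    intro i hi t hρ
    rw [hrec i hi t] at hρ
    exact map_nonneg_of_map_smul_sub_add_nonneg hmono hhomog (ha_pos (i + 1) hi t)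
      (hα_le i hi (ψ i t)) hρ
  have hψ : ∀ i ≤ n, ∀ t, 0 ≤ ρ (ψ i t) := forall_le_of_descending_step hinit htop hstep
  refine ⟨hψ, fun t => (map_smul_nonneg_iff_of_pos hhomog (ha_pos 0 n.zero_le t)).1 ?_⟩
  exact hψ0 t ▸ hψ 0 n.zero_le t

end OrderedModule

/-- Risk-sensitive safety guarantee for Risk-aware Adaptive CBFs (RACBFs, Theorem 3),
stated along a fixed stochastic trajectory: `ρ` is a monotone, superadditive,
positively homogeneous, normalized acceptability functional (coherent risk measure in
the gain orientation), `h t : Ω → ℝ` is the random barrier value, `a i t` are strictly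
positive deterministic auxiliary variables, and `ψ i` are the random DAVCBFs. If
`ρ (ψ i 0) ≥ 0` for all `i < m` and `ρ (ψ (m-1) t) ≥ 0` for all `t`, then
`ρ (ψ i t) ≥ 0` for all `i < m` and `t`, and `ρ (h t) ≥ 0` for all `t`. -/
theorem racbf_safety {Ω : Type*} (ρ : (Ω → ℝ) → ℝ)
    (hmono : ∀ X Y : Ω → ℝ, (∀ ω, X ω ≤ Y ω) → ρ X ≤ ρ Y)
    (hsuper : ∀ X Y : Ω → ℝ, ρ X + ρ Y ≤ ρ (X + Y))
    (hhomog : ∀ c : ℝ, 0 ≤ c → ∀ X : Ω → ℝ, ρ (fun ω => c * X ω) = c * ρ X)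
    (hnorm : ρ (fun _ => 0) = 0)
    (m : ℕ) (hm : 1 ≤ m) (h : ℕ → Ω → ℝ) (ψ : ℕ → ℕ → Ω → ℝ)
    (a : ℕ → ℕ → ℝ) (α : ℕ → ℝ → ℝ)
    (ha_pos : ∀ i : ℕ, 1 ≤ i → i ≤ m → ∀ t : ℕ, 0 < a i t)
    (hα_le : ∀ i : ℕ, 1 ≤ i → i ≤ m - 1 → ∀ s : ℝ, α i s ≤ s)
    (hψ0 : ∀ t : ℕ, ∀ ω : Ω, ψ 0 t ω = a 1 t * h t ω)
    (hrec : ∀ i : ℕ, 1 ≤ i → i ≤ m - 1 → ∀ t : ℕ, ∀ ω : Ω,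
      ψ i t ω = a (i + 1) t *
        (ψ (i - 1) (t + 1) ω - ψ (i - 1) t ω + α i (ψ (i - 1) t ω)))
    (hinit : ∀ i : ℕ, i < m → 0 ≤ ρ (ψ i 0))
    (htop : ∀ t : ℕ, 0 ≤ ρ (ψ (m - 1) t)) :
    (∀ i : ℕ, i < m → ∀ t : ℕ, 0 ≤ ρ (ψ i t)) ∧ (∀ t : ℕ, 0 ≤ ρ (h t)) := by
  obtain ⟨n, rfl⟩ := Nat.exists_eq_add_of_le' hm
  have hgen := racbf_safety_general (n := n) (α := fun i X ω => α i (X ω)) hmono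
    (fun c hc => hhomog c hc.le) (fun i hi => ha_pos (i + 1) i.succ_pos (Nat.succ_le_succ hi))
    (fun i hi X ω => hα_le (i + 1) i.succ_pos hi (X ω)) (fun t => funext (hψ0 t))
    (fun i hi t => funext (hrec (i + 1) i.succ_pos hi t))
    (fun i hi => hinit i (Nat.lt_succ_of_lt hi)) htop
  exact ⟨fun i hi => hgen.1 i (Nat.le_of_lt_succ hi), hgen.2⟩
end
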